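/- Let d ≥ 2 be an integer and 0 < t < d/(d−1). Then the lower box dimension of G_{t,d} satisfies liminf_{δ→0⁺} log N_δ(G_{t,d})/(−log δ) ≥ d²/(d + t). -/

import Mathlib

/-!
The lower bound is a second moment argument. Let `Q ≈ δ ^ (-d / (d + t))` and consider the points
of the graph above the rational points `p / q` of `(0,1)^(d-1)` whose denominator `q ≤ Q` is prime.
By Chebyshev's estimate there are at least about `(Q / log Q) ^ d` of them (`card_primeFracs_ge`,
`eventually_primeCounting_half`). If `N` cubes of side `δ` cover the graph, assign each point
to a cube containing it; two points in one cube are `δ`-close in every coordinate, so by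
Cauchy-Schwarz (number of points)² ≤ `N` · (number of close pairs) (`card_sq_le`).

Close pairs are counted as follows. Points with the same denominator `q` cannot be close unless
they coincide, since `δ q < 1`; this gives at most `Q ^ d` pairs. For different denominators,
closeness of the heights `q ^ (-t)` forces `|q - q'| ≤ δ Q ^ (t + 1) / t` (`rpow_neg_gap`), and for
given primes `q ≠ q'` each coordinate contributes at most `2 δ q q'` pairs of numerators
(`card_close_pairs`), because `a q' - b q` is a nonzero integer bounded by `δ q q'` which
determines `(a, b)`. The choice of `Q` is exactly the one for which the resulting total
`Q · δ Q ^ (t + 1) · (δ Q²) ^ (d - 1) = δ ^ d Q ^ (2 d + t)` is again at most `Q ^ d`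
(`card_closePairs_le'`). Hence `N` is at least a constant times `Q ^ d / (log Q) ^ (2 d)`, and
`Q ^ d ≈ δ ^ (-d² / (d + t))`; the logarithms disappear in the limit (`tendsto_bound`).

Restricting to prime denominators makes every pair of distinct denominators coprime. A trivial
upper bound on the covering number (`ratio_le`) is also needed, because the `liminf` of a real
function that is unbounded above has a junk value.
-/

open Set MeasureTheory Filter

noncomputable section

/-- Minimal number of closed axis-parallel cubes of side length `δ` needed to cover `S`. -/
def cubeCoverNum (n : ℕ) (δ : ℝ) (S : Set (EuclideanSpace ℝ (Fin n))) : ℕ :=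
  sInf {m : ℕ | ∃ c : Fin m → (Fin n → ℝ),
    S ⊆ ⋃ i, {z : EuclideanSpace ℝ (Fin n) | ∀ j, z j ∈ Set.Icc (c i j) (c i j + δ)}}

-- The popcorn pyramid function `f_{t,d}` on `[0,1]^{d-1}`.
open Classical in
def popcornFun (t : ℝ) (d : ℕ) (x : Fin (d-1) → ℝ) : ℝ :=
  if h : ∃ q : ℕ, ∃ p : Fin (d-1) → ℕ,
      (∀ i, 1 ≤ p i ∧ p i < q ∧ Nat.Coprime (p i) q) ∧ (∀ i, x i = (p i : ℝ) / (q : ℝ))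
  then (h.choose : ℝ) ^ (-t)
  else 0

/-- The graph `G_{t,d}` of the popcorn pyramid function, as a subset of `ℝ^d`. -/
def Gset (t : ℝ) (d : ℕ) : Set (EuclideanSpace ℝ (Fin d)) :=
  {z | ∃ x : Fin (d-1) → ℝ, (∀ i, x i ∈ Set.Icc (0:ℝ) 1) ∧
    (∀ i : Fin (d-1), z (Fin.castLE (Nat.sub_le d 1) i) = x i) ∧
    (∀ j : Fin d, (j : ℕ) = d - 1 → z j = popcornFun t d x)}

/-- The set `F_{t,d} ⊆ ℝ^d`. -/
def Fset (t : ℝ) (d : ℕ) : Set (EuclideanSpace ℝ (Fin d)) :=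
  {z | ∃ q : ℕ, ∃ p : Fin (d-1) → ℕ, (∀ i, 1 ≤ p i ∧ p i < q) ∧
      (∀ i : Fin (d-1), z (Fin.castLE (Nat.sub_le d 1) i) = (p i : ℝ) / (q : ℝ)) ∧
      (∀ j : Fin d, (j : ℕ) = d - 1 → z j = (q : ℝ) ^ (-t))} ∪
  {z | (∀ i : Fin (d-1), z (Fin.castLE (Nat.sub_le d 1) i) ∈ Set.Icc (0:ℝ) 1) ∧
    (∀ j : Fin d, (j : ℕ) = d - 1 → z j = 0)}

/-- Upper box dimension, via covering numbers by closed cubes. -/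
def upperBoxDim (n : ℕ) (S : Set (EuclideanSpace ℝ (Fin n))) : ℝ :=
  limsup (fun δ : ℝ => Real.log (cubeCoverNum n δ S) / (-Real.log δ)) (nhdsWithin 0 (Set.Ioi 0))

/-- Lower box dimension, via covering numbers by closed cubes. -/
def lowerBoxDim (n : ℕ) (S : Set (EuclideanSpace ℝ (Fin n))) : ℝ :=
  liminf (fun δ : ℝ => Real.log (cubeCoverNum n δ S) / (-Real.log δ)) (nhdsWithin 0 (Set.Ioi 0))

/-- Assouad dimension. -/
def assouadDim (n : ℕ) (S : Set (EuclideanSpace ℝ (Fin n))) : ℝ :=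
  sInf {α : ℝ | ∃ C : ℝ, 0 < C ∧ ∀ x ∈ S, ∀ r R : ℝ, 0 < r → r < R →
    (cubeCoverNum n r (Metric.closedBall x R ∩ S) : ℝ) ≤ C * (R / r) ^ α}

/-- Upper θ-intermediate dimension (with the convention that `θ = 0` gives Hausdorff dimension).
Covers are finite, which is no loss of generality since all covering sets have diameter
bounded below by `δ^(1/θ) > 0`. -/
def upperIntDim (n : ℕ) (θ : ℝ) (S : Set (EuclideanSpace ℝ (Fin n))) : ℝ :=
  if θ = 0 then (dimH S).toReal else
  sInf {s : ℝ | 0 ≤ s ∧ ∀ ε : ℝ, 0 < ε → ∃ δ₀ : ℝ, 0 < δ₀ ∧ δ₀ ≤ 1 ∧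
    ∀ δ : ℝ, 0 < δ → δ < δ₀ →
    ∃ (m : ℕ) (U : Fin m → Set (EuclideanSpace ℝ (Fin n))),
      S ⊆ (⋃ i, U i) ∧ (∀ i, δ ^ (1/θ) ≤ Metric.diam (U i) ∧ Metric.diam (U i) ≤ δ) ∧
      (∑ i, Metric.diam (U i) ^ s) ≤ ε}

/-- Lower θ-intermediate dimension (with the convention that `θ = 0` gives Hausdorff dimension). -/
def lowerIntDim (n : ℕ) (θ : ℝ) (S : Set (EuclideanSpace ℝ (Fin n))) : ℝ :=
  if θ = 0 then (dimH S).toReal else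
  sInf {s : ℝ | 0 ≤ s ∧ ∀ ε : ℝ, 0 < ε → ∀ δ₀ : ℝ, 0 < δ₀ → δ₀ ≤ 1 →
    ∃ δ : ℝ, 0 < δ ∧ δ < δ₀ ∧
    ∃ (m : ℕ) (U : Fin m → Set (EuclideanSpace ℝ (Fin n))),
      S ⊆ (⋃ i, U i) ∧ (∀ i, δ ^ (1/θ) ≤ Metric.diam (U i) ∧ Metric.diam (U i) ≤ δ) ∧
      (∑ i, Metric.diam (U i) ^ s) ≤ ε}

/-- `l_t(k,δ) = ⌊(1/(kδ))^(1/t)⌋`. -/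
def lfun (t δ : ℝ) (k : ℕ) : ℕ := Nat.floor ((1/((k:ℝ)*δ)) ^ (1/t))

/-- The Duffin–Schaeffer sets `E^{(d-1)}(δ,n) ⊆ ℝ^{d-1}`. -/
def Eset (d : ℕ) (δ : ℝ) (n : ℕ) : Set (EuclideanSpace ℝ (Fin (d-1))) :=
  {z | ∃ m : Fin (d-1) → ℕ, (∀ i, 1 ≤ m i ∧ m i < n ∧ Nat.Coprime (m i) n) ∧
    ∀ i, z i ∈ Set.Ioo ((m i : ℝ)/(n:ℝ) - δ) ((m i : ℝ)/(n:ℝ) + δ)}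

/-- The horizontal-layer input sets `L_{t,d}(δ,k) ⊆ [0,1]^{d-1}`. -/
def Lset (t : ℝ) (d : ℕ) (δ : ℝ) (k : ℕ) : Set (EuclideanSpace ℝ (Fin (d-1))) :=
  {z | ∃ n : ℕ, lfun t δ (k+1) < n ∧ n ≤ lfun t δ k ∧
    ∃ m : Fin (d-1) → ℕ, (∀ i, 1 ≤ m i ∧ m i < n ∧ Nat.Coprime (m i) n) ∧
    ∀ i, z i = (m i : ℝ)/(n:ℝ)}

end

/-! ### Close pairs of fractions with given denominators -/

/-- For distinct primes `q, q'`, few fractions `a/q` and `b/q'` in `(0,1)` are `δ`-close: the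
integer `a q' - b q` is nonzero, at most `δ q q'` in absolute value, and determines `(a, b)`. -/
lemma card_close_pairs {q q' : ℕ} (hq : q.Prime) (hq' : q'.Prime) (hne : q ≠ q') {δ : ℝ}
    (hδ : 0 ≤ δ) :
    ((((Finset.Ico 1 q) ×ˢ (Finset.Ico 1 q')).filter
      (fun x : ℕ × ℕ => |(x.1:ℝ)/q - (x.2:ℝ)/q'| ≤ δ)).card : ℝ) ≤ 2 * (δ * q * q') := by
  have hq0 : (0:ℝ) < q := by exact_mod_cast hq.pos
  have hq0' : (0:ℝ) < q' := by exact_mod_cast hq'.pos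
  have hcop : Nat.Coprime q q' := (Nat.coprime_primes hq hq').2 hne
  have hH : 0 ≤ δ * q * q' := by positivity
  set H := ⌊δ * q * q'⌋ with hHdef
  have hH0 : 0 ≤ H := Int.floor_nonneg.2 hH
  have hsub : (((Finset.Ico 1 q) ×ˢ (Finset.Ico 1 q')).filter
      (fun x : ℕ × ℕ => |(x.1:ℝ)/q - (x.2:ℝ)/q'| ≤ δ)).card ≤
      ((Finset.Icc (-H) H).erase 0).card := by
    apply Finset.card_le_card_of_injOn (fun x => (x.1 : ℤ) * q' - x.2 * q)
    · rintro ⟨a, b⟩ hx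
      simp only [Finset.coe_filter, Finset.mem_product, Finset.mem_Ico, Set.mem_ofPred_eq] at hx
      obtain ⟨⟨⟨ha1, ha2⟩, hb1, hb2⟩, hab⟩ := hx
      have h1 : |(a:ℝ) * q' - b * q| ≤ δ * q * q' := by
        have : (a:ℝ) * q' - b * q = ((a:ℝ)/q - (b:ℝ)/q') * (q * q') := by field_simp
        rw [this, abs_mul, abs_of_pos (mul_pos hq0 hq0'), mul_assoc]
        gcongr
      rw [abs_le] at h1
      have h2 : (a:ℤ) * q' - b * q ≤ H := by
        rw [hHdef, Int.le_floor]; push_cast; exact h1.2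
      have h3 : -((a:ℤ) * q' - b * q) ≤ H := by
        rw [hHdef, Int.le_floor]; push_cast; linarith [h1.1]
      simp only [Finset.coe_erase, Finset.coe_Icc, Set.mem_sdiff, Set.mem_Icc,
        Set.mem_singleton_iff]
      refine ⟨⟨by linarith, h2⟩, fun h0 => ?_⟩
      have h4 : a * q' = b * q := by zify; linarith
      have h5 : q ∣ a * q' := h4 ▸ Dvd.intro_left b rfl
      have h6 := hcop.dvd_of_dvd_mul_right h5
      exact absurd (Nat.le_of_dvd (by omega) h6) (by omega)
    · rintro ⟨a, b⟩ hx ⟨a', b'⟩ hx' h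
      simp only [Finset.coe_filter, Finset.mem_product, Finset.mem_Ico, Set.mem_ofPred_eq] at hx hx'
      obtain ⟨⟨⟨ha1, ha2⟩, hb1, hb2⟩, -⟩ := hx
      obtain ⟨⟨⟨ha1', ha2'⟩, hb1', hb2'⟩, -⟩ := hx'
      simp only at h
      have h4 : ((a:ℤ) - a') * q' = (b - b') * q := by linarith
      have hc : IsCoprime (q:ℤ) (q':ℤ) := Nat.isCoprime_iff_coprime.2 hcop
      have h6 : (q:ℤ) ∣ (a:ℤ) - a' := hc.dvd_of_dvd_mul_right (h4 ▸ Dvd.intro_left _ rfl)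
      have h7 : (a:ℤ) - a' = 0 := by
        apply Int.eq_zero_of_abs_lt_dvd h6
        rw [abs_lt]; constructor <;> omega
      rw [h7, zero_mul] at h4
      have h8 : (b:ℤ) - b' = 0 := by
        rcases mul_eq_zero.1 h4.symm with h | h
        · exact h
        · exact absurd h (by exact_mod_cast hq.ne_zero)
      simp only [Prod.mk.injEq]; omega
  have hcard : (((Finset.Icc (-H) H).erase 0).card : ℤ) = 2 * H := by
    rw [Finset.card_erase_of_mem (by simp [hH0]), Int.card_Icc]
    omega
  have hcard' : (((Finset.Icc (-H) H).erase 0).card : ℝ) = 2 * (H:ℝ) := by exact_mod_cast hcard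
  calc _ ≤ (((Finset.Icc (-H) H).erase 0).card : ℝ) := by exact_mod_cast hsub
    _ = 2 * (H:ℝ) := hcard'
    _ ≤ _ := by gcongr; exact Int.floor_le _

/-- `card_close_pairs` applied in each of `n` coordinates. -/
lemma card_close_vectors {n q q' : ℕ} (hq : q.Prime) (hq' : q'.Prime) (hne : q ≠ q') {δ : ℝ}
    (hδ : 0 ≤ δ) :
    ((((Fintype.piFinset fun _ : Fin n => Finset.Ico 1 q) ×ˢ
        (Fintype.piFinset fun _ : Fin n => Finset.Ico 1 q')).filter
      (fun x => ∀ i, |(x.1 i:ℝ)/q - (x.2 i:ℝ)/q'| ≤ δ)).card : ℝ) ≤ (2 * (δ * q * q')) ^ n := by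
  have h1 : (((Fintype.piFinset fun _ : Fin n => Finset.Ico 1 q) ×ˢ
        (Fintype.piFinset fun _ : Fin n => Finset.Ico 1 q')).filter
      (fun x => ∀ i, |(x.1 i:ℝ)/q - (x.2 i:ℝ)/q'| ≤ δ)).card ≤
      (Fintype.piFinset fun _ : Fin n => ((Finset.Ico 1 q) ×ˢ (Finset.Ico 1 q')).filter
      (fun x : ℕ × ℕ => |(x.1:ℝ)/q - (x.2:ℝ)/q'| ≤ δ)).card := by
    apply Finset.card_le_card_of_injOn (fun x i => (x.1 i, x.2 i))
    · rintro ⟨a, b⟩ hx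
      simp only [Finset.coe_filter, Finset.mem_product, Fintype.mem_piFinset, Set.mem_ofPred_eq]
        at hx
      simp only [Finset.mem_coe, Fintype.mem_piFinset, Finset.mem_filter, Finset.mem_product]
      exact fun i => ⟨⟨hx.1.1 i, hx.1.2 i⟩, hx.2 i⟩
    · rintro ⟨a, b⟩ - ⟨a', b'⟩ - h
      have h' := fun i => congrFun h i
      simp only [Prod.mk.injEq] at h'
      simp only [Prod.mk.injEq]
      exact ⟨funext fun i => (h' i).1, funext fun i => (h' i).2⟩
  rw [Fintype.card_piFinset_const] at h1
  refine (Nat.cast_le.2 h1).trans ?_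
  push_cast
  gcongr
  exact card_close_pairs hq hq' hne hδ

/-- Points with the same denominator `q < 1 / δ` are `δ`-close only if they coincide. -/
lemma close_vectors_diag {n q : ℕ} {δ : ℝ} (hδq : δ * q < 1) :
    (((Fintype.piFinset fun _ : Fin n => Finset.Ico 1 q) ×ˢ
        (Fintype.piFinset fun _ : Fin n => Finset.Ico 1 q)).filter
      (fun x => ∀ i, |(x.1 i:ℝ)/q - (x.2 i:ℝ)/q| ≤ δ)).card ≤ q ^ n := by
  have : (Fintype.piFinset fun _ : Fin n => Finset.range q).card = q ^ n := by simp
  rw [← this]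
  apply Finset.card_le_card_of_injOn Prod.fst
  · rintro ⟨a, b⟩ hx
    simp only [Finset.coe_filter, Finset.mem_product, Fintype.mem_piFinset, Set.mem_ofPred_eq,
      Finset.mem_Ico] at hx
    simpa using fun i => (hx.1.1 i).2
  · have key : ∀ x ∈ (((Fintype.piFinset fun _ : Fin n => Finset.Ico 1 q) ×ˢ
        (Fintype.piFinset fun _ : Fin n => Finset.Ico 1 q)).filter
      (fun x => ∀ i, |(x.1 i:ℝ)/q - (x.2 i:ℝ)/q| ≤ δ)), x.1 = x.2 := by
      rintro ⟨a, b⟩ hx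
      simp only [Finset.mem_filter, Finset.mem_product, Fintype.mem_piFinset,
        Finset.mem_Ico] at hx
      ext i
      have hi := hx.2 i
      have hq0 : (0:ℝ) < q := by exact_mod_cast lt_trans (hx.1.1 i).1 (hx.1.1 i).2
      rw [← sub_div, abs_div, abs_of_pos hq0, div_le_iff₀ hq0] at hi
      have h1 : |((a i : ℤ) - (b i : ℤ))| < 1 := by
        have := hi.trans_lt hδq
        exact_mod_cast this
      have h2 := Int.abs_lt_one_iff.1 h1
      simp only; omega
    intro x hx y hy h
    have h1 := key x hx
    have h2 := key y hy
    ext1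
    · exact h
    · rw [← h1, ← h2]; exact h

lemma rpow_neg_gap_aux {t : ℝ} (ht : 0 < t) {a b Q : ℝ} (ha : 0 < a) (hab : a ≤ b) (hb : b ≤ Q) :
    t * (b - a) ≤ (a ^ (-t) - b ^ (-t)) * Q ^ (t + 1) := by
  have hb0 : 0 < b := ha.trans_le hab
  have h1 : a ^ (-t) = b ^ (-t) * (a / b) ^ (-t) := by
    rw [← Real.mul_rpow hb0.le (by positivity)]
    congr 1; field_simp
  have h2 : 1 + t * (1 - a / b) ≤ (a / b) ^ (-t) := by
    rw [Real.rpow_def_of_pos (by positivity)]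
    have h3 := Real.add_one_le_exp (Real.log (a / b) * -t)
    have h4 := Real.log_le_sub_one_of_pos (show 0 < a / b by positivity)
    nlinarith
  have h5 : b ^ (-t) * (t * (1 - a / b)) ≤ a ^ (-t) - b ^ (-t) := by
    rw [h1]
    have := mul_le_mul_of_nonneg_left h2 (Real.rpow_nonneg hb0.le (-t))
    linarith
  have h6 : 0 ≤ t * (1 - a / b) := by
    have : a / b ≤ 1 := (div_le_one hb0).2 hab
    exact mul_nonneg ht.le (by linarith)
  calc t * (b - a) = b ^ (-t) * (t * (1 - a / b)) * b ^ (t + 1) := by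
        rw [Real.rpow_add hb0, Real.rpow_neg hb0.le, Real.rpow_one]
        have := (Real.rpow_pos_of_pos hb0 t).ne'
        field_simp
    _ ≤ b ^ (-t) * (t * (1 - a / b)) * Q ^ (t + 1) := by
        gcongr
    _ ≤ _ := mul_le_mul_of_nonneg_right h5 (Real.rpow_nonneg (hb0.le.trans hb) _)

/-- Denominators up to `Q` whose heights `q ^ (-t)` are `δ`-close differ by at most
`δ Q ^ (t + 1) / t`. -/
lemma rpow_neg_gap {t : ℝ} (ht : 0 < t) {a b Q δ : ℝ} (ha : 0 < a) (hb : 0 < b) (haQ : a ≤ Q)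
    (hbQ : b ≤ Q) (h : |a ^ (-t) - b ^ (-t)| ≤ δ) : |a - b| ≤ δ * Q ^ (t + 1) / t := by
  have hQ : 0 < Q := ha.trans_le haQ
  rw [le_div_iff₀ ht]
  rw [abs_le] at h
  have hp := Real.rpow_pos_of_pos hQ (t + 1)
  rcases le_total a b with hab | hab
  · rw [abs_of_nonpos (by linarith)]
    have := rpow_neg_gap_aux ht ha hab hbQ
    nlinarith
  · rw [abs_of_nonneg (by linarith)]
    have := rpow_neg_gap_aux ht hb hab haQ
    nlinarith

/-- At most `2 K` integers other than `q` lie within distance `K` of `q`. -/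
lemma card_near (q : ℕ) (s : Finset ℕ) {K : ℝ} (hK : 0 ≤ K) :
    ((s.filter (fun q' => q ≠ q' ∧ |(q:ℝ) - q'| ≤ K)).card : ℝ) ≤ 2 * K := by
  have hH0 : 0 ≤ ⌊K⌋ := Int.floor_nonneg.2 hK
  have hsub : (s.filter (fun q' => q ≠ q' ∧ |(q:ℝ) - q'| ≤ K)).card ≤
      ((Finset.Icc (-⌊K⌋) ⌊K⌋).erase 0).card := by
    apply Finset.card_le_card_of_injOn (fun x : ℕ => (x : ℤ) - q)
    · intro x hx
      simp only [Finset.coe_filter, Set.mem_ofPred_eq] at hx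
      obtain ⟨-, h1, h2⟩ := hx
      rw [abs_le] at h2
      have h3 : (x:ℤ) - q ≤ ⌊K⌋ := by rw [Int.le_floor]; push_cast; linarith
      have h4 : -((x:ℤ) - q) ≤ ⌊K⌋ := by rw [Int.le_floor]; push_cast; linarith
      simp only [Finset.coe_erase, Finset.coe_Icc, Set.mem_sdiff, Set.mem_Icc,
        Set.mem_singleton_iff]
      omega
    · intro x _ y _ h
      simp only at h
      omega
  have hcard : (((Finset.Icc (-⌊K⌋) ⌊K⌋).erase 0).card : ℤ) = 2 * ⌊K⌋ := by
    rw [Finset.card_erase_of_mem (by simp [hH0]), Int.card_Icc]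
    omega
  have hcard' : (((Finset.Icc (-⌊K⌋) ⌊K⌋).erase 0).card : ℝ) = 2 * (⌊K⌋:ℝ) := by
    exact_mod_cast hcard
  calc _ ≤ (((Finset.Icc (-⌊K⌋) ⌊K⌋).erase 0).card : ℝ) := by exact_mod_cast hsub
    _ = 2 * (⌊K⌋:ℝ) := hcard'
    _ ≤ _ := by gcongr; exact Int.floor_le _

/-! ### Rational points with prime denominator and their close pairs -/

/-- The rational points of `(0,1)^n` with prime common denominator `q ≤ Q`, encoded as
pairs (denominator, numerators). -/
def primeFracs (n Q : ℕ) : Finset (Σ _ : ℕ, Fin n → ℕ) :=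
  (Nat.primesLE Q).sigma fun q => Fintype.piFinset fun _ => Finset.Ico 1 q

/-- The pairs of points of `primeFracs n Q` whose images on the graph of the popcorn function
differ by at most `δ` in every coordinate. -/
noncomputable def closePairs (t : ℝ) (n Q : ℕ) (δ : ℝ) :
    Finset ((Σ _ : ℕ, Fin n → ℕ) × (Σ _ : ℕ, Fin n → ℕ)) :=
  (primeFracs n Q ×ˢ primeFracs n Q).filter fun x =>
    |(x.1.1 : ℝ) ^ (-t) - (x.2.1 : ℝ) ^ (-t)| ≤ δ ∧
      ∀ i, |(x.1.2 i : ℝ) / x.1.1 - (x.2.2 i : ℝ) / x.2.1| ≤ δ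

lemma card_primesLE_le (Q : ℕ) : (Nat.primesLE Q).card ≤ Q := by
  have : Nat.primesLE Q ⊆ Finset.Icc 1 Q := fun q hq => by
    rw [Nat.mem_primesLE] at hq
    exact Finset.mem_Icc.2 ⟨hq.2.pos, hq.1⟩
  simpa using Finset.card_le_card this

/-- With `h = ⌊π(Q) / 2⌋`, at least `h` primes up to `Q` exceed `h`, and each of them gives at
least `h ^ n` points. -/
lemma card_primeFracs_ge (n Q : ℕ) :
    (Nat.primeCounting Q / 2) ^ (n + 1) ≤ (primeFracs n Q).card := by
  set h := Nat.primeCounting Q / 2 with hh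
  have h2 : 2 * h ≤ (Nat.primesLE Q).card := by
    rw [Nat.primesLE_card_eq_primeCounting]; omega
  have h3 : h ≤ (Nat.primesLE Q \ Nat.primesLE h).card := by
    have := Finset.le_card_sdiff (Nat.primesLE h) (Nat.primesLE Q)
    have := card_primesLE_le h
    omega
  have h4 : (primeFracs n Q).card = ∑ q ∈ Nat.primesLE Q, (q - 1) ^ n := by
    simp [primeFracs, Finset.card_sigma]
  rw [h4]
  calc h ^ (n + 1) = h * h ^ n := by ring
    _ ≤ (Nat.primesLE Q \ Nat.primesLE h).card * h ^ n := by gcongr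
    _ = ∑ q ∈ Nat.primesLE Q \ Nat.primesLE h, h ^ n := by simp
    _ ≤ ∑ q ∈ Nat.primesLE Q \ Nat.primesLE h, (q - 1) ^ n := by
      apply Finset.sum_le_sum
      intro q hq
      simp only [Finset.mem_sdiff, Nat.mem_primesLE, not_and] at hq
      have : h < q := by
        by_contra hc
        exact hq.2 (by omega) hq.1.2
      gcongr
      omega
    _ ≤ _ := Finset.sum_le_sum_of_subset Finset.sdiff_subset

/-- Distinct denominators contribute only when they are near each other, equal ones only the
diagonal. -/
lemma card_closePairs_le {t : ℝ} (ht : 0 < t) (n Q : ℕ) {δ : ℝ} (hδ : 0 ≤ δ) (hδQ : δ * Q < 1) :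
    ((closePairs t n Q δ).card : ℝ) ≤
      Q * (Q ^ n + 2 * (δ * Q ^ (t + 1) / t) * (2 * (δ * Q * Q)) ^ n) := by
  set K : ℝ := δ * Q ^ (t + 1) / t with hK
  have hK0 : 0 ≤ K := by positivity
  set B : ℝ := (2 * (δ * Q * Q)) ^ n with hB
  have hB0 : 0 ≤ B := by positivity
  have hfib : (closePairs t n Q δ).card = ∑ y ∈ Nat.primesLE Q ×ˢ Nat.primesLE Q,
      ((closePairs t n Q δ).filter fun x => (x.1.1, x.2.1) = y).card := by
    apply Finset.card_eq_sum_card_fiberwise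
    intro x hx
    simp only [closePairs, primeFracs, Finset.coe_filter, Finset.mem_product, Finset.mem_sigma,
      Set.mem_ofPred_eq] at hx
    simp only [Finset.coe_product, Set.mem_prod, Finset.mem_coe]
    exact ⟨hx.1.1.1, hx.1.2.1⟩
  have hcell : ∀ q ∈ Nat.primesLE Q, ∀ q' ∈ Nat.primesLE Q,
      (((closePairs t n Q δ).filter fun x => (x.1.1, x.2.1) = (q, q')).card : ℝ) ≤
        (if q = q' then (Q:ℝ) ^ n else 0) + (if q ≠ q' ∧ |(q:ℝ) - q'| ≤ K then B else 0) := by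
    intro q hq q' hq'
    rw [Nat.mem_primesLE] at hq hq'
    have hqQ : (q:ℝ) ≤ Q := by exact_mod_cast hq.1
    have hqQ' : (q':ℝ) ≤ Q := by exact_mod_cast hq'.1
    have hq0 : (0:ℝ) < q := by exact_mod_cast hq.2.pos
    have hq0' : (0:ℝ) < q' := by exact_mod_cast hq'.2.pos
    have hinj : ((closePairs t n Q δ).filter fun x => (x.1.1, x.2.1) = (q, q')).card ≤
        (((Fintype.piFinset fun _ : Fin n => Finset.Ico 1 q) ×ˢ
        (Fintype.piFinset fun _ : Fin n => Finset.Ico 1 q')).filter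
      (fun x => ∀ i, |(x.1 i:ℝ)/q - (x.2 i:ℝ)/q'| ≤ δ)).card := by
      apply Finset.card_le_card_of_injOn (fun x => (x.1.2, x.2.2))
      · rintro ⟨⟨r, a⟩, ⟨r', a'⟩⟩ hx
        simp only [closePairs, primeFracs, Finset.coe_filter, Finset.mem_product,
          Finset.mem_sigma, Finset.mem_filter, Set.mem_ofPred_eq, Prod.mk.injEq] at hx
        obtain ⟨⟨⟨⟨-, h1⟩, -, h2⟩, -, h3⟩, rfl, rfl⟩ := hx
        simp only [Finset.coe_filter, Finset.mem_product, Set.mem_ofPred_eq]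
        exact ⟨⟨h1, h2⟩, h3⟩
      · rintro ⟨⟨r, a⟩, ⟨r', a'⟩⟩ hx ⟨⟨s, b⟩, ⟨s', b'⟩⟩ hy h
        simp only [Finset.coe_filter, Set.mem_ofPred_eq, Prod.mk.injEq] at hx hy h
        obtain ⟨-, rfl, rfl⟩ := hx
        obtain ⟨-, rfl, rfl⟩ := hy
        obtain ⟨rfl, rfl⟩ := h
        rfl
    by_cases hne : q = q'
    · subst hne
      have hd : δ * q < 1 := lt_of_le_of_lt (by gcongr) hδQ
      have h1 := hinj.trans (close_vectors_diag hd)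
      simp only [if_true, ne_eq, not_true_eq_false, false_and, if_false, add_zero]
      calc _ ≤ ((q ^ n : ℕ) : ℝ) := by exact_mod_cast h1
        _ ≤ _ := by push_cast; gcongr
    · by_cases hnear : |(q:ℝ) - q'| ≤ K
      · simp only [hne, if_false, ne_eq, not_false_eq_true, hnear, and_self, if_true, zero_add]
        calc _ ≤ _ := Nat.cast_le.2 hinj
          _ ≤ _ := card_close_vectors hq.2 hq'.2 hne hδ
          _ ≤ B := by rw [hB]; gcongr
      · simp only [hne, if_false, hnear, and_false, add_zero]
        refine le_of_eq ?_
        rw [Nat.cast_eq_zero, Finset.card_eq_zero, Finset.filter_eq_empty_iff]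
        rintro ⟨⟨r, a⟩, ⟨r', a'⟩⟩ hx h
        simp only [Prod.mk.injEq] at h
        obtain ⟨rfl, rfl⟩ := h
        simp only [closePairs, Finset.mem_filter] at hx
        exact hnear (rpow_neg_gap ht hq0 hq0' hqQ hqQ' hx.2.1)
  rw [hfib, Nat.cast_sum, Finset.sum_product]
  calc _ ≤ ∑ q ∈ Nat.primesLE Q, ∑ q' ∈ Nat.primesLE Q, ((if q = q' then (Q:ℝ) ^ n else 0) +
        (if q ≠ q' ∧ |(q:ℝ) - q'| ≤ K then B else 0)) :=
        Finset.sum_le_sum fun q hq => Finset.sum_le_sum fun q' hq' => hcell q hq q' hq'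
    _ ≤ ∑ q ∈ Nat.primesLE Q, ((Q:ℝ) ^ n + 2 * K * B) := by
      apply Finset.sum_le_sum
      intro q hq
      rw [Finset.sum_add_distrib, Finset.sum_ite_eq, if_pos hq, ← Finset.sum_filter,
        Finset.sum_const, nsmul_eq_mul]
      gcongr
      exact card_near q _ hK0
    _ ≤ _ := by
      rw [Finset.sum_const, nsmul_eq_mul]
      gcongr
      exact card_primesLE_le Q

/-- The bound of `card_closePairs_le` when `δ ≤ Q ^ (-(d + t) / d)`. -/
lemma card_closePairs_le' {t : ℝ} (ht : 0 < t) (n Q : ℕ) {δ : ℝ} (hδ : 0 ≤ δ) (hδQ : δ * Q < 1)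
    (hQ : 0 < Q) (h : δ ^ (n + 1) * (Q:ℝ) ^ ((n:ℝ) + 1 + t) ≤ 1) :
    ((closePairs t n Q δ).card : ℝ) ≤ (1 + 2 * 2 ^ n / t) * Q ^ (n + 1) := by
  have hQ0 : (0:ℝ) < Q := by exact_mod_cast hQ
  refine (card_closePairs_le ht n Q hδ hδQ).trans ?_
  have e1 : (Q:ℝ) ^ ((n:ℝ) + 1 + t) = Q ^ n * Q * Q ^ t := by
    rw [Real.rpow_add hQ0, Real.rpow_add hQ0, Real.rpow_natCast, Real.rpow_one]
  have e2 : (Q:ℝ) ^ (t + 1) = Q ^ t * Q := by rw [Real.rpow_add hQ0, Real.rpow_one]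
  have e3 : (2 * (δ * Q * Q)) ^ n = 2 ^ n * δ ^ n * Q ^ n * Q ^ n := by
    rw [mul_pow, mul_pow, mul_pow]; ring
  rw [e1] at h
  rw [e2, e3]
  calc _ = (Q:ℝ) ^ (n + 1) + 2 * 2 ^ n / t * (δ ^ (n + 1) * (Q ^ n * Q * Q ^ t)) * Q ^ (n + 1) := by
        field_simp
        ring
    _ ≤ (Q:ℝ) ^ (n + 1) + 2 * 2 ^ n / t * 1 * Q ^ (n + 1) := by gcongr
    _ = _ := by ring

/-! ### The popcorn graph and its covers -/

/-- The chosen denominator in `popcornFun` is the only possible one. -/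
lemma popcornFun_frac {d : ℕ} (hd : 2 ≤ d) (t : ℝ) (q : ℕ) (p : Fin (d - 1) → ℕ)
    (hp : ∀ i, 1 ≤ p i ∧ p i < q ∧ Nat.Coprime (p i) q) :
    popcornFun t d (fun i => (p i : ℝ) / q) = (q : ℝ) ^ (-t) := by
  have h : ∃ q' : ℕ, ∃ p' : Fin (d-1) → ℕ,
      (∀ i, 1 ≤ p' i ∧ p' i < q' ∧ Nat.Coprime (p' i) q') ∧
        (∀ i, (p i : ℝ) / q = (p' i : ℝ) / (q' : ℝ)) := ⟨q, p, hp, fun _ => rfl⟩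
  unfold popcornFun
  rw [dif_pos h]
  obtain ⟨p', hp', he⟩ := h.choose_spec
  set q' := h.choose
  have i : Fin (d - 1) := ⟨0, by omega⟩
  obtain ⟨h1, h2, h3⟩ := hp i
  obtain ⟨h1', h2', h3'⟩ := hp' i
  have e := he i
  have hq : (q:ℝ) ≠ 0 := by exact_mod_cast (by omega : q ≠ 0)
  have hq' : (q':ℝ) ≠ 0 := by exact_mod_cast (by omega : q' ≠ 0)
  rw [div_eq_div_iff hq hq'] at e
  have e' : p i * q' = p' i * q := by exact_mod_cast e
  have d1 : q ∣ q' := h3.symm.dvd_of_dvd_mul_left (e' ▸ Dvd.intro_left _ rfl)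
  have d2 : q' ∣ q := h3'.symm.dvd_of_dvd_mul_left (e' ▸ Dvd.intro_left _ rfl)
  rw [Nat.dvd_antisymm d1 d2]

lemma popcornFun_mem {d : ℕ} (hd : 2 ≤ d) {t : ℝ} (ht : 0 < t) (x : Fin (d - 1) → ℝ) :
    popcornFun t d x ∈ Set.Icc (0:ℝ) 1 := by
  unfold popcornFun
  split_ifs with h
  · obtain ⟨p', hp', -⟩ := h.choose_spec
    set q' := h.choose
    have i : Fin (d - 1) := ⟨0, by omega⟩
    have h1 : (1:ℝ) ≤ q' := by
      have := hp' i
      exact_mod_cast (by omega : 1 ≤ q')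
    exact ⟨by positivity, Real.rpow_le_one_of_one_le_of_nonpos h1 (by linarith)⟩
  · simp

lemma Gset_mem_Icc {d : ℕ} (hd : 2 ≤ d) {t : ℝ} (ht : 0 < t) {z : EuclideanSpace ℝ (Fin d)}
    (hz : z ∈ Gset t d) (j : Fin d) : z j ∈ Set.Icc (0:ℝ) 1 := by
  obtain ⟨x, hx, h1, h2⟩ := hz
  by_cases hj : (j : ℕ) = d - 1
  · rw [h2 j hj]; exact popcornFun_mem hd ht x
  · have := h1 ⟨j, by omega⟩
    have e : Fin.castLE (Nat.sub_le d 1) ⟨j, by omega⟩ = j := rfl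
    rw [e] at this
    rw [this]; exact hx _

/-- A grid of cubes covers the graph, which lies in the unit cube. -/
lemma exists_grid_cover {d : ℕ} (hd : 2 ≤ d) {t : ℝ} (ht : 0 < t) {δ : ℝ} (hδ : 0 < δ) :
    ∃ c : Fin ((⌊1 / δ⌋₊ + 1) ^ d) → (Fin d → ℝ),
      Gset t d ⊆ ⋃ i, {z : EuclideanSpace ℝ (Fin d) |
        ∀ j, z j ∈ Set.Icc (c i j) (c i j + δ)} := by
  set k := ⌊1 / δ⌋₊
  -- The cube containing `z` has the index vector `⌊z j / δ⌋ ∈ {0, …, k}`.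
  have e : (Fin d → Fin (k + 1)) ≃ Fin ((k + 1) ^ d) := Fintype.equivFinOfCardEq (by simp)
  refine ⟨fun i j => δ * (e.symm i j : ℕ), fun z hz => ?_⟩
  have hz' := Gset_mem_Icc hd ht hz
  refine Set.mem_iUnion.2 ⟨e fun j => ⟨⌊z j / δ⌋₊, ?_⟩, fun j => ?_⟩
  · rw [Nat.lt_succ_iff]
    apply Nat.floor_le_floor
    gcongr
    exact (Set.mem_Icc.1 (hz' j)).2
  · simp only [Equiv.symm_apply_apply]
    have h1 := Nat.floor_le (div_nonneg (hz' j).1 hδ.le)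
    have h2 := Nat.lt_floor_add_one (z j / δ)
    rw [le_div_iff₀ hδ] at h1
    rw [div_lt_iff₀ hδ] at h2
    constructor <;> linarith

lemma cubeCoverNum_le {d : ℕ} (hd : 2 ≤ d) {t : ℝ} (ht : 0 < t) {δ : ℝ} (hδ : 0 < δ) :
    cubeCoverNum d δ (Gset t d) ≤ (⌊1 / δ⌋₊ + 1) ^ d :=
  Nat.sInf_le (exists_grid_cover hd ht hδ)

/-- Second moment estimate: two points assigned to the same cube form a close pair, so
Cauchy-Schwarz bounds the number of points by the numbers of cubes and of close pairs. -/
lemma card_sq_le {d : ℕ} (hd : 2 ≤ d) {t : ℝ} (ht : 0 < t) {δ : ℝ} (hδ : 0 < δ) (Q : ℕ) :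
    (primeFracs (d - 1) Q).card ^ 2 ≤
      cubeCoverNum d δ (Gset t d) * (closePairs t (d - 1) Q δ).card := by
  obtain ⟨c, hc⟩ : cubeCoverNum d δ (Gset t d) ∈ {m : ℕ | ∃ c : Fin m → (Fin d → ℝ),
      Gset t d ⊆ ⋃ i, {z : EuclideanSpace ℝ (Fin d) |
        ∀ j, z j ∈ Set.Icc (c i j) (c i j + δ)}} :=
    Nat.sInf_mem ⟨_, exists_grid_cover hd ht hδ⟩
  generalize cubeCoverNum d δ (Gset t d) = m at c hc ⊢
  set P := primeFracs (d - 1) Q with hP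
  have hex : ∀ x : Σ _ : ℕ, Fin (d - 1) → ℕ, ∃ i : Fin m, x ∈ P →
      ((x.1 : ℝ) ^ (-t) ∈ Set.Icc (c i ⟨d - 1, by omega⟩) (c i ⟨d - 1, by omega⟩ + δ)) ∧
      ∀ j : Fin (d - 1), (x.2 j : ℝ) / x.1 ∈
        Set.Icc (c i (Fin.castLE (Nat.sub_le d 1) j)) (c i (Fin.castLE (Nat.sub_le d 1) j) + δ) := by
    have hcov : ∀ x ∈ P, ∃ i : Fin m,
      ((x.1 : ℝ) ^ (-t) ∈ Set.Icc (c i ⟨d - 1, by omega⟩) (c i ⟨d - 1, by omega⟩ + δ)) ∧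
      ∀ j : Fin (d - 1), (x.2 j : ℝ) / x.1 ∈
        Set.Icc (c i (Fin.castLE (Nat.sub_le d 1) j))
          (c i (Fin.castLE (Nat.sub_le d 1) j) + δ) := by
      rintro ⟨q, p⟩ hx
      simp only [hP, primeFracs, Finset.mem_sigma, Nat.mem_primesLE, Fintype.mem_piFinset,
        Finset.mem_Ico] at hx
      obtain ⟨⟨-, hq⟩, hp⟩ := hx
      have hp' : ∀ i, 1 ≤ p i ∧ p i < q ∧ Nat.Coprime (p i) q := fun i =>
        ⟨(hp i).1, (hp i).2, (Nat.coprime_of_lt_prime (by have := (hp i).1; omega) (hp i).2 hq).symm⟩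
      let z : EuclideanSpace ℝ (Fin d) := WithLp.toLp 2 fun j =>
        if h : (j : ℕ) < d - 1 then (p ⟨j, h⟩ : ℝ) / q else (q : ℝ) ^ (-t)
      have hz1 : ∀ j : Fin (d - 1), z (Fin.castLE (Nat.sub_le d 1) j) = (p j : ℝ) / q := by
        intro j; simp [z]
      have hz2 : ∀ j : Fin d, (j : ℕ) = d - 1 → z j = (q : ℝ) ^ (-t) := by
        intro j hj; simp [z, hj]
      have hz : z ∈ Gset t d := by
        refine ⟨fun j => (p j : ℝ) / q, fun j => ⟨by positivity, ?_⟩, hz1, fun j hj => ?_⟩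
        · apply div_le_one_of_le₀ _ (by positivity)
          exact_mod_cast (hp j).2.le
        · rw [hz2 j hj, popcornFun_frac hd t q p hp']
      obtain ⟨i, hi⟩ := Set.mem_iUnion.1 (hc hz)
      refine ⟨i, ?_, fun j => ?_⟩
      · have := hi ⟨d - 1, by omega⟩
        rw [hz2 _ rfl] at this
        exact this
      · have := hi (Fin.castLE (Nat.sub_le d 1) j)
        rw [hz1] at this
        exact this
    -- Any point of the graph shows `m > 0`, which gives a value of `f` outside `P`.
    have hm : Nonempty (Fin m) := by
      have h0 : (WithLp.toLp 2 fun j : Fin d => if h : (j : ℕ) < d - 1 then (0 : ℝ) else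
          popcornFun t d 0 : EuclideanSpace ℝ (Fin d)) ∈ Gset t d := by
        refine ⟨0, fun i => by simp, fun i => by simp, fun j hj => by simp [hj]⟩
      obtain ⟨i, -⟩ := Set.mem_iUnion.1 (hc h0)
      exact ⟨i⟩
    intro x
    by_cases hx : x ∈ P
    · obtain ⟨i, hi⟩ := hcov x hx
      exact ⟨i, fun _ => hi⟩
    · exact ⟨Classical.choice hm, fun h => absurd h hx⟩
  choose f hf using hex
  have h1 : P.card = ∑ i : Fin m, (P.filter fun x => f x = i).card :=
    Finset.card_eq_sum_card_fiberwise (by simp)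
  have h2 : ∑ i : Fin m, (P.filter fun x => f x = i).card ^ 2 ≤
      (closePairs t (d - 1) Q δ).card := by
    calc _ = ∑ i : Fin m, ((P.filter fun x => f x = i) ×ˢ (P.filter fun x => f x = i)).card := by
          simp [sq]
      _ = (Finset.univ.sigma fun i : Fin m =>
            (P.filter fun x => f x = i) ×ˢ (P.filter fun x => f x = i)).card := by
          rw [Finset.card_sigma]
      _ ≤ _ := by
        apply Finset.card_le_card_of_injOn (fun y => y.2)
        · rintro ⟨i, x, y⟩ h
          simp only [Finset.coe_sigma, Set.mem_sigma_iff, Finset.mem_coe, Finset.mem_product,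
            Finset.mem_filter, Finset.mem_univ, true_and] at h
          obtain ⟨⟨hx, rfl⟩, hy, hxy⟩ := h
          have hx' := hf x hx
          have hy' := hf y hy
          rw [hxy] at hy'
          simp only [closePairs, Finset.coe_filter, Finset.mem_product, Set.mem_ofPred_eq]
          refine ⟨⟨hx, hy⟩, ?_, fun j => ?_⟩
          · have a := hx'.1
            have b := hy'.1
            rw [Set.mem_Icc] at a b
            rw [abs_le]; constructor <;> linarith
          · have a := hx'.2 j
            have b := hy'.2 j
            rw [Set.mem_Icc] at a b
            rw [abs_le]; constructor <;> linarith
        · rintro ⟨i, x, y⟩ h ⟨i', x', y'⟩ h' e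
          simp only [Finset.coe_sigma, Set.mem_sigma_iff, Finset.mem_coe, Finset.mem_product,
            Finset.mem_filter, Finset.mem_univ, true_and] at h h'
          obtain ⟨rfl, rfl⟩ := Prod.mk.inj e
          obtain rfl : i = i' := h.1.2.symm.trans h'.1.2
          rfl
  calc P.card ^ 2 = (∑ i : Fin m, (P.filter fun x => f x = i).card) ^ 2 := by rw [← h1]
    _ ≤ m * ∑ i : Fin m, (P.filter fun x => f x = i).card ^ 2 := by
      have := sq_sum_le_card_mul_sum_sq (s := (Finset.univ : Finset (Fin m)))
        (f := fun i => (P.filter fun x => f x = i).card)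
      simpa using this
    _ ≤ _ := by gcongr

/-! ### Asymptotics -/

/-- Chebyshev's lower bound for `π(Q)`, for the integer part of `π(Q) / 2`. -/
lemma eventually_primeCounting_half :
    ∀ᶠ Q : ℕ in atTop, (Q : ℝ) / (16 * Real.log Q) ≤ ((Nat.primeCounting Q / 2 : ℕ) : ℝ) := by
  have hlog : Tendsto (fun Q : ℕ => Real.log (Q:ℝ) / Q) atTop (nhds 0) := by
    have := (Real.isLittleO_log_id_atTop.tendsto_div_nhds_zero).comp
      (tendsto_natCast_atTop_atTop (R := ℝ))
    exact this
  filter_upwards [hlog.eventually_lt_const (show (0:ℝ) < 1 / 16 by norm_num),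
    eventually_ge_atTop 16] with Q h1 hQ
  have hQ' : (16:ℝ) ≤ Q := by exact_mod_cast hQ
  have hQ0 : (0:ℝ) < Q := by linarith
  rw [div_lt_iff₀ hQ0] at h1
  have hl0 : 0 < Real.log Q := Real.log_pos (by linarith)
  have h2 := Chebyshev.pi_ge Q
  rw [div_le_iff₀ hl0] at h2
  have hl1 : Real.log (Q + 1) ≤ Real.log Q + 1 / 16 := by
    have : Real.log (Q + 1) = Real.log Q + Real.log (1 + 1 / Q) := by
      rw [← Real.log_mul (by positivity) (by positivity)]
      congr 1; field_simp
    have h3 := Real.log_le_sub_one_of_pos (show (0:ℝ) < 1 + 1 / Q by positivity)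
    have h4 : (1:ℝ) / Q ≤ 1 / 16 := by gcongr
    linarith
  have hl2 := Real.log_two_gt_d9
  have h3 : Nat.primeCounting Q ≤ 2 * (Nat.primeCounting Q / 2) + 1 := by omega
  have h3' : (Nat.primeCounting Q : ℝ) ≤ 2 * ((Nat.primeCounting Q / 2 : ℕ) : ℝ) + 1 := by
    exact_mod_cast h3
  rw [div_le_iff₀ (by positivity)]
  nlinarith

/-- The lower bound `N ≥ (Q / (16 log Q)) ^ (2 d) / (C Q ^ d)` in logarithmic form. -/
lemma log_cover_ge {d : ℕ} (hd : 2 ≤ d) {t : ℝ} (ht : 0 < t) {δ : ℝ} (hδ : 0 < δ) {Q : ℕ}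
    (hδQ : δ * Q < 1) (hQ : 2 ≤ Q) (h : δ ^ d * (Q:ℝ) ^ ((d:ℝ) + t) ≤ 1)
    (hπ : (Q : ℝ) / (16 * Real.log Q) ≤ ((Nat.primeCounting Q / 2 : ℕ) : ℝ)) :
    d * Real.log Q - 2 * d * Real.log (16 * Real.log Q) - Real.log (1 + 2 * 2 ^ (d - 1) / t) ≤
      Real.log (cubeCoverNum d δ (Gset t d)) := by
  have hQ1 : (1:ℝ) < Q := by exact_mod_cast hQ
  have hQ0 : (0:ℝ) < Q := by linarith
  have hl0 : 0 < Real.log Q := Real.log_pos hQ1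
  have hdd : d - 1 + 1 = d := by omega
  have hddr : ((d - 1 : ℕ) : ℝ) + 1 = d := by exact_mod_cast hdd
  have h1 := card_closePairs_le' ht (d - 1) Q hδ.le hδQ (by omega) (by rwa [hdd, hddr])
  have h2 := card_primeFracs_ge (d - 1) Q
  have h3 := card_sq_le hd ht hδ Q
  rw [hdd] at h1 h2
  set C : ℝ := 1 + 2 * 2 ^ (d - 1) / t with hC
  have hC0 : 0 < C := by positivity
  set N := cubeCoverNum d δ (Gset t d)
  have h4 : (((Q:ℝ) / (16 * Real.log Q)) ^ d) ^ 2 ≤ N * (C * Q ^ d) := by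
    calc (((Q:ℝ) / (16 * Real.log Q)) ^ d) ^ 2
        ≤ (((Nat.primeCounting Q / 2 : ℕ) : ℝ) ^ d) ^ 2 := by gcongr
      _ ≤ ((primeFracs (d - 1) Q).card : ℝ) ^ 2 := by gcongr; exact_mod_cast h2
      _ ≤ N * (closePairs t (d - 1) Q δ).card := by exact_mod_cast h3
      _ ≤ _ := by gcongr
  have hpos : 0 < (((Q:ℝ) / (16 * Real.log Q)) ^ d) ^ 2 := by positivity
  have hN : (N:ℝ) ≠ 0 := by
    intro h0
    rw [h0, zero_mul] at h4
    linarith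
  have h5 := Real.log_le_log hpos h4
  rw [Real.log_mul hN (by positivity), Real.log_mul hC0.ne' (by positivity), Real.log_pow,
    Real.log_pow, Real.log_pow, Real.log_div hQ0.ne' (by positivity)] at h5
  push_cast at h5
  linarith

/-- With `x = -log δ` and `a x - log 2 ≤ log Q ≤ a x`, the bound of `log_cover_ge` divided by
`-log δ` is at least the function considered here (for `D = d`). -/
lemma tendsto_bound {a : ℝ} (ha : 0 < a) (D C : ℝ) :
    Tendsto (fun x : ℝ => (D * (a * x - Real.log 2) - 2 * D * Real.log (16 * (a * x)) - C) / x)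
      atTop (nhds (D * a)) := by
  have h1 : Tendsto (fun x : ℝ => Real.log x / x) atTop (nhds 0) :=
    Real.isLittleO_log_id_atTop.tendsto_div_nhds_zero
  have h2 : Tendsto (fun x : ℝ => (D * Real.log 2 + 2 * D * Real.log (16 * a) + C) / x) atTop
      (nhds 0) := tendsto_const_nhds.div_atTop tendsto_id
  have h3 : Tendsto (fun x : ℝ => D * a - 2 * D * (Real.log x / x) -
      (D * Real.log 2 + 2 * D * Real.log (16 * a) + C) / x) atTop (nhds (D * a)) := by
    simpa using ((tendsto_const_nhds (x := D * a)).sub (h1.const_mul (2 * D))).sub h2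
  refine h3.congr' ?_
  filter_upwards [eventually_gt_atTop 0] with x hx
  rw [show 16 * (a * x) = (16 * a) * x by ring, Real.log_mul (by positivity) hx.ne']
  field_simp
  ring

/-- An upper bound which keeps the `liminf` in `lowerBoxDim` from being a junk value. -/
lemma ratio_le {d : ℕ} (hd : 2 ≤ d) {t : ℝ} (ht : 0 < t) {δ : ℝ} (hδ : 0 < δ) (hδ2 : δ < 1 / 2) :
    Real.log (cubeCoverNum d δ (Gset t d)) / (-Real.log δ) ≤ 2 * d := by
  have hl : Real.log δ < 0 := Real.log_neg hδ (by linarith)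
  rw [div_le_iff₀ (by linarith)]
  have h1 : (cubeCoverNum d δ (Gset t d) : ℝ) ≤ ((⌊1 / δ⌋₊ : ℝ) + 1) ^ d := by
    exact_mod_cast cubeCoverNum_le hd ht hδ
  have h2 : (⌊1 / δ⌋₊ : ℝ) + 1 ≤ (δ⁻¹) ^ 2 := by
    have h3 := Nat.floor_le (show 0 ≤ 1 / δ by positivity)
    have h4 : 2 ≤ δ⁻¹ := by rw [le_inv_comm₀ (by norm_num) hδ]; linarith
    rw [one_div] at h3 ⊢
    nlinarith
  rcases Nat.eq_zero_or_pos (cubeCoverNum d δ (Gset t d)) with h0 | h0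
  · rw [h0]
    simp only [Nat.cast_zero, Real.log_zero]
    have : (0:ℝ) ≤ d := by positivity
    nlinarith
  · have h5 : (cubeCoverNum d δ (Gset t d) : ℝ) ≤ ((δ⁻¹) ^ 2) ^ d :=
      h1.trans (by gcongr)
    have h6 := Real.log_le_log (by exact_mod_cast h0) h5
    rw [Real.log_pow, Real.log_pow, Real.log_inv] at h6
    push_cast at h6
    linarith

/-- lower bound for the lower box dimension of `G_{t,d}`. -/
theorem lower_box_dimension_of_popcorn_graph (d : ℕ) (hd : 2 ≤ d) (t : ℝ) (ht : 0 < t)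
    (ht' : t < (d:ℝ)/((d:ℝ)-1)) :
    (d:ℝ)^2/((d:ℝ)+t) ≤ lowerBoxDim d (Gset t d) := by
  have hd0 : (0:ℝ) < d := by exact_mod_cast (by omega : 0 < d)
  set a : ℝ := d / (d + t) with ha
  have ha0 : 0 < a := by positivity
  have ha1 : a < 1 := by rw [ha, div_lt_one (by positivity)]; linarith
  set C : ℝ := Real.log (1 + 2 * 2 ^ (d - 1) / t)
  have hx : Tendsto (fun δ : ℝ => -Real.log δ) (nhdsWithin 0 (Set.Ioi 0)) atTop :=
    tendsto_neg_atBot_atTop.comp Real.tendsto_log_nhdsGT_zero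
  have hg := (tendsto_bound ha0 d C).comp hx
  have hQt : Tendsto (fun x : ℝ => ⌊Real.exp (a * x)⌋₊) atTop atTop :=
    tendsto_nat_floor_atTop.comp (Real.tendsto_exp_atTop.comp (tendsto_id.const_mul_atTop ha0))
  have hpos : ∀ᶠ δ : ℝ in nhdsWithin 0 (Set.Ioi 0), δ ∈ Set.Ioi (0:ℝ) := self_mem_nhdsWithin
  have hsmall : ∀ᶠ δ : ℝ in nhdsWithin 0 (Set.Ioi 0), δ < 1 / 2 :=
    nhdsWithin_le_nhds (eventually_lt_nhds (by norm_num))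
  have hle : ∀ᶠ δ : ℝ in nhdsWithin 0 (Set.Ioi 0),
      ((fun x : ℝ => (d * (a * x - Real.log 2) - 2 * d * Real.log (16 * (a * x)) - C) / x) ∘
        fun δ : ℝ => -Real.log δ) δ ≤ Real.log (cubeCoverNum d δ (Gset t d)) / (-Real.log δ) := by
    filter_upwards [hpos, hsmall, (hQt.comp hx).eventually eventually_primeCounting_half,
      (hQt.comp hx).eventually (eventually_ge_atTop 2)] with δ hδ hδ2 hπ hQ2
    rw [Set.mem_Ioi] at hδ
    simp only [Function.comp] at hπ hQ2 ⊢
    set x := -Real.log δ with hxdef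
    have hx0 : 0 < x := by
      have := Real.log_neg hδ (by linarith); linarith
    have hδx : δ = Real.exp (-x) := by rw [hxdef, neg_neg, Real.exp_log hδ]
    set Q := ⌊Real.exp (a * x)⌋₊ with hQ
    have hQle : (Q:ℝ) ≤ Real.exp (a * x) := Nat.floor_le (Real.exp_pos _).le
    have hQ2' : (2:ℝ) ≤ Q := by exact_mod_cast hQ2
    have hQ0 : (0:ℝ) < Q := by linarith
    have hlogle : Real.log Q ≤ a * x := by
      rw [← Real.log_exp (a * x)]; exact Real.log_le_log hQ0 hQle
    have hlogge : a * x - Real.log 2 ≤ Real.log Q := by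
      have h1 : Real.exp (a * x) ≤ 2 * Q := by
        have := Nat.lt_floor_add_one (Real.exp (a * x))
        rw [← hQ] at this
        linarith
      have h2 := Real.log_le_log (Real.exp_pos _) h1
      rw [Real.log_exp, Real.log_mul (by norm_num) hQ0.ne'] at h2
      linarith
    have hl0 : 0 < Real.log Q := Real.log_pos (by linarith)
    have hδQ : δ * Q < 1 := by
      calc δ * Q ≤ Real.exp (-x) * Real.exp (a * x) := by rw [hδx]; gcongr
        _ = Real.exp (-x + a * x) := by rw [Real.exp_add]
        _ < 1 := by rw [Real.exp_lt_one_iff]; nlinarith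
    have hcrit : δ ^ d * (Q:ℝ) ^ ((d:ℝ) + t) ≤ 1 := by
      calc δ ^ d * (Q:ℝ) ^ ((d:ℝ) + t) ≤ Real.exp (-x) ^ d * (Real.exp (a * x)) ^ ((d:ℝ) + t) := by
            rw [← hδx]; gcongr
        _ = Real.exp (d * -x + a * x * (d + t)) := by
            rw [← Real.exp_mul, ← Real.exp_nat_mul, ← Real.exp_add]
        _ = 1 := by
            rw [Real.exp_eq_one_iff, ha]; field_simp; ring
        _ ≤ 1 := le_rfl
    have hmain := log_cover_ge hd ht hδ hδQ hQ2 hcrit hπ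
    rw [div_le_div_iff_of_pos_right hx0]
    refine le_trans ?_ hmain
    have h1 : Real.log (16 * Real.log Q) ≤ Real.log (16 * (a * x)) :=
      Real.log_le_log (by positivity) (by linarith)
    gcongr
  have hval : (d:ℝ)^2/((d:ℝ)+t) = d * a := by rw [ha]; ring
  rw [hval, lowerBoxDim, ← hg.liminf_eq]
  refine liminf_le_liminf hle hg.isBoundedUnder_ge ?_
  refine IsBoundedUnder.isCoboundedUnder_ge ⟨2 * d, ?_⟩
  rw [eventually_map]
  filter_upwards [hpos, hsmall] with δ hδ hδ2 using ratio_le hd ht hδ hδ2
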